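/- For every p : ℕ → ℕ, the series defining g converges for every x ∈ ℝ, the function g is infinitely differentiable, and g is a Schwartz function: for all d, m ∈ ℕ there is a constant C such that |x|^d · |g⁽ᵐ⁾(x)| ≤ C for all x ∈ ℝ. -/

import Mathlib

/-- The standard bump function `f(x) = exp(x²/(x²−1))` for `|x| < 1`, and `0` otherwise. -/
noncomputable def bump (x : ℝ) : ℝ :=
  if |x| < 1 then Real.exp (x ^ 2 / (x ^ 2 - 1)) else 0

/-- The coefficients `cᵢ = 2^(−(i+1)) · (2p(i)+1)^(−i) · (17i)^(−4i)`
(with the conventions `(2p(0)+1)⁰ = 1` and `(17·0)⁰ = 1`, so `c₀ = 1/2`). -/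
noncomputable def coeffc (p : ℕ → ℕ) (i : ℕ) : ℝ :=
  (2 : ℝ) ^ (-((i : ℤ) + 1)) * ((2 * (p i : ℝ) + 1) ^ (-(i : ℤ))) *
    ((17 * (i : ℝ)) ^ (-(4 * (i : ℤ))))

/-- `g(x) = Σᵢ cᵢ f(x − 2p(i))`. -/
noncomputable def gfun (p : ℕ → ℕ) (x : ℝ) : ℝ :=
  ∑' i : ℕ, coeffc p i * bump (x - 2 * (p i : ℝ))

/-!
Schwartz seminorms of a translate grow polynomially in the displacement: `(1 + ‖a‖) ^ k` times a
constant bounds the `(k, n)` seminorm of `f (· - a)`. Since `cᵢ ≤ 2⁻ⁱ (2 p(i) + 1)⁻ⁱ`, the terms of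
`∑ cᵢ (1 + 2 p(i)) ^ k` are at most `2⁻ⁱ` once `i ≥ k`, whatever `p` is. Hence the series defining
`g` is absolutely convergent in every Schwartz seminorm, and its sum is a Schwartz function.
-/

open scoped SchwartzMap ContDiff

section SchwartzSeries

theorem norm_pow_le_one_add_norm_pow_mul {E : Type*} [SeminormedAddCommGroup E]
    (a x : E) (k : ℕ) :
    ‖x‖ ^ k ≤ (1 + ‖a‖) ^ k * (1 + ‖x - a‖) ^ k := by
  rw [← mul_pow]
  gcongr
  calc ‖x‖ ≤ ‖a‖ + ‖x - a‖ := norm_le_insert' x a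
    _ ≤ (1 + ‖a‖) * (1 + ‖x - a‖) := by nlinarith [norm_nonneg a, norm_nonneg (x - a)]

variable {ι 𝕜 E F : Type*} [RCLike 𝕜] [NormedAddCommGroup E] [NormedSpace ℝ E]
  [NormedAddCommGroup F] [NormedSpace ℝ F] [NormedSpace 𝕜 F]

variable (𝕜) in
theorem seminorm_compSubConstCLM_le (f : 𝓢(E, F)) (k n : ℕ) (a : E) :
    SchwartzMap.seminorm 𝕜 k n (f.compSubConstCLM 𝕜 a) ≤ (1 + ‖a‖) ^ k *
      (2 ^ k * (Finset.Iic (k, n)).sup (schwartzSeminormFamily 𝕜 E F) f) := by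
  refine SchwartzMap.seminorm_le_bound 𝕜 k n _ (by positivity) fun x ↦ ?_
  have hderiv : iteratedFDeriv ℝ n (f.compSubConstCLM 𝕜 a) x = iteratedFDeriv ℝ n f (x - a) :=
    iteratedFDeriv_comp_sub n a x
  calc ‖x‖ ^ k * ‖iteratedFDeriv ℝ n (f.compSubConstCLM 𝕜 a) x‖
    _ ≤ (1 + ‖a‖) ^ k * ((1 + ‖x - a‖) ^ k * ‖iteratedFDeriv ℝ n f (x - a)‖) := by
      rw [hderiv, ← mul_assoc]
      gcongr
      exact norm_pow_le_one_add_norm_pow_mul a x k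
    _ ≤ _ := mul_le_mul_of_nonneg_left
      (SchwartzMap.one_add_le_sup_seminorm_apply (m := (k, n)) le_rfl le_rfl f (x - a))
      (by positivity)

theorem summable_seminorm_smul_compSubConstCLM (f : 𝓢(E, F)) {c : ι → 𝕜} {a : ι → E} {k : ℕ}
    (h : Summable fun i ↦ ‖c i‖ * (1 + ‖a i‖) ^ k) (n : ℕ) :
    Summable fun i ↦ SchwartzMap.seminorm 𝕜 k n (c i • f.compSubConstCLM 𝕜 (a i)) := by
  refine .of_nonneg_of_le (fun i ↦ apply_nonneg _ _) (fun i ↦ ?_) (h.mul_right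
    (2 ^ k * (Finset.Iic (k, n)).sup (schwartzSeminormFamily 𝕜 E F) f))
  rw [map_smul_eq_mul, mul_assoc]
  gcongr
  exact seminorm_compSubConstCLM_le 𝕜 f k n (a i)

variable [CompleteSpace F] {u : ι → 𝓢(E, F)}

theorem summable_apply_of_summable_seminorm
    (hu : Summable fun i ↦ SchwartzMap.seminorm 𝕜 0 0 (u i)) (x : E) :
    Summable fun i ↦ u i x :=
  hu.of_norm_bounded fun i ↦ (u i).norm_le_seminorm 𝕜 x

theorem contDiff_tsum_of_summable_seminorm
    (hu : ∀ n, Summable fun i ↦ SchwartzMap.seminorm 𝕜 0 n (u i)) :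
    ContDiff ℝ ∞ fun x ↦ ∑' i, u i x :=
  contDiff_tsum (fun i ↦ (u i).smooth ⊤) (fun n _ ↦ hu n)
    fun n i x _ ↦ (u i).norm_iteratedFDeriv_le_seminorm 𝕜 n x

theorem norm_pow_mul_norm_iteratedFDeriv_tsum_le
    (hu : ∀ k n, Summable fun i ↦ SchwartzMap.seminorm 𝕜 k n (u i)) (k n : ℕ) (x : E) :
    ‖x‖ ^ k * ‖iteratedFDeriv ℝ n (fun y ↦ ∑' i, u i y) x‖ ≤
      ∑' i, SchwartzMap.seminorm 𝕜 k n (u i) := by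
  have hderiv : iteratedFDeriv ℝ n (fun y ↦ ∑' i, u i y) x = ∑' i, iteratedFDeriv ℝ n (u i) x :=
    iteratedFDeriv_tsum_apply (N := ⊤) (fun i ↦ (u i).smooth ⊤) (fun n _ ↦ hu 0 n)
      (fun n i x _ ↦ (u i).norm_iteratedFDeriv_le_seminorm 𝕜 n x) le_top x
  rw [hderiv, ← norm_norm x, ← norm_pow, ← norm_smul, ← tsum_const_smul'']
  refine tsum_of_norm_bounded (hu k n).hasSum fun i ↦ ?_
  rw [norm_smul, norm_pow, norm_norm]
  exact (u i).le_seminorm 𝕜 k n x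

variable (u) in
/-- The pointwise sum of a family of Schwartz functions which is absolutely summable in every
Schwartz seminorm, as a Schwartz function. -/
noncomputable def schwartzTsum
    (hu : ∀ k n, Summable fun i ↦ SchwartzMap.seminorm 𝕜 k n (u i)) : 𝓢(E, F) where
  toFun x := ∑' i, u i x
  smooth' := contDiff_tsum_of_summable_seminorm (hu 0)
  decay' k n := ⟨_, norm_pow_mul_norm_iteratedFDeriv_tsum_le hu k n⟩

end SchwartzSeries

section Bump

theorem bump_eq_exp_one_mul_expNegInvGlue (x : ℝ) :
    bump x = Real.exp 1 * expNegInvGlue (1 - x ^ 2) := by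
  by_cases h : |x| < 1
  · have hx : 0 < 1 - x ^ 2 := sub_pos.2 ((sq_lt_one_iff_abs_lt_one x).2 h)
    have hexponent : x ^ 2 / (x ^ 2 - 1) = 1 + -(1 - x ^ 2)⁻¹ := by
      have : x ^ 2 - 1 ≠ 0 := by linarith
      field_simp
      ring
    rw [bump, if_pos h, expNegInvGlue, if_neg hx.not_ge, ← Real.exp_add, hexponent]
  · have hx : 1 - x ^ 2 ≤ 0 := sub_nonpos.2 ((one_le_sq_iff_one_le_abs x).2 (not_lt.1 h))
    rw [bump, if_neg h, expNegInvGlue.zero_of_nonpos hx, mul_zero]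

theorem contDiff_bump : ContDiff ℝ ∞ bump := by
  rw [funext bump_eq_exp_one_mul_expNegInvGlue]
  exact contDiff_const.mul (expNegInvGlue.contDiff.comp (contDiff_const.sub (contDiff_id.pow 2)))

theorem hasCompactSupport_bump : HasCompactSupport bump :=
  .intro (isCompact_closedBall (0 : ℝ) 1) fun _ hx ↦
    if_neg fun h ↦ hx (mem_closedBall_zero_iff.2 h.le)

/-- The bump function as an element of the Schwartz space. -/
noncomputable def bumpSchwartz : 𝓢(ℝ, ℝ) :=
  hasCompactSupport_bump.toSchwartzMap contDiff_bump

end Bump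

section Coefficients

variable (p : ℕ → ℕ)

theorem coeffc_nonneg (i : ℕ) : 0 ≤ coeffc p i := by
  unfold coeffc
  positivity

theorem coeffc_le (i : ℕ) :
    coeffc p i ≤ (1 / 2) ^ i * ((2 * (p i : ℝ) + 1) ^ i)⁻¹ := by
  have htwo : (2 : ℝ) ^ (-((i : ℤ) + 1)) ≤ (1 / 2) ^ i := by
    rw [one_div, inv_pow, ← zpow_natCast, ← zpow_neg]
    gcongr
    · norm_num
    · omega
  have hseventeen : (17 * (i : ℝ)) ^ (-(4 * (i : ℤ))) ≤ 1 := by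
    rcases i.eq_zero_or_pos with rfl | hi
    · simp
    · have : (1 : ℝ) ≤ i := by exact_mod_cast hi
      exact zpow_le_one_of_nonpos₀ (by linarith) (by omega)
  rw [coeffc, zpow_neg (2 * (p i : ℝ) + 1), zpow_natCast]
  exact (mul_le_of_le_one_right (by positivity) hseventeen).trans (by gcongr)

theorem coeffc_mul_pow_le {k i : ℕ} (h : k ≤ i) :
    coeffc p i * (2 * (p i : ℝ) + 1) ^ k ≤ (1 / 2) ^ i := by
  have hone : (1 : ℝ) ≤ 2 * p i + 1 := le_add_of_nonneg_left (by positivity)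
  calc coeffc p i * (2 * (p i : ℝ) + 1) ^ k
    _ ≤ (1 / 2) ^ i * ((2 * (p i : ℝ) + 1) ^ i)⁻¹ * (2 * (p i : ℝ) + 1) ^ i := by
      gcongr
      exact coeffc_le p i
    _ = (1 / 2) ^ i := inv_mul_cancel_right₀ (by positivity) _

theorem summable_coeffc_mul_pow (k : ℕ) :
    Summable fun i ↦ coeffc p i * (2 * (p i : ℝ) + 1) ^ k := by
  refine summable_geometric_two.of_norm_bounded_eventually_nat ?_
  filter_upwards [Filter.eventually_ge_atTop k] with i hi
  rw [Real.norm_of_nonneg (mul_nonneg (coeffc_nonneg p i) (by positivity))]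
  exact coeffc_mul_pow_le p hi

theorem summable_seminorm_gfun_term (k n : ℕ) :
    Summable fun i ↦ SchwartzMap.seminorm ℝ k n
      (coeffc p i • bumpSchwartz.compSubConstCLM ℝ (2 * (p i : ℝ))) := by
  refine summable_seminorm_smul_compSubConstCLM bumpSchwartz
    ((summable_coeffc_mul_pow p k).congr fun i ↦ ?_) n
  rw [Real.norm_of_nonneg (coeffc_nonneg p i), Real.norm_of_nonneg (by positivity), add_comm]

/-- The function `g` as an element of the Schwartz space. -/
noncomputable def gfunSchwartz : 𝓢(ℝ, ℝ) :=
  schwartzTsum (fun i ↦ coeffc p i • bumpSchwartz.compSubConstCLM ℝ (2 * (p i : ℝ)))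
    (summable_seminorm_gfun_term p)

theorem coe_gfunSchwartz : ⇑(gfunSchwartz p) = gfun p := rfl

end Coefficients

/-- The series defining `g` converges everywhere, `g` is smooth, and `g` is a Schwartz
function: all quantities `|x|^d |g⁽ᵐ⁾(x)|` are bounded. -/
theorem gfun_schwartz (p : ℕ → ℕ) :
    (∀ x : ℝ, Summable fun i : ℕ => coeffc p i * bump (x - 2 * (p i : ℝ))) ∧
      ContDiff ℝ (⊤ : ℕ∞) (gfun p) ∧
      ∀ d m : ℕ, ∃ C : ℝ, ∀ x : ℝ, |x| ^ d * |iteratedDeriv m (gfun p) x| ≤ C := by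
  refine ⟨summable_apply_of_summable_seminorm (summable_seminorm_gfun_term p 0 0), ?_, ?_⟩
  · exact coe_gfunSchwartz p ▸ (gfunSchwartz p).smooth ⊤
  · intro d m
    rw [← coe_gfunSchwartz]
    exact ⟨_, (gfunSchwartz p).le_seminorm' ℝ d m⟩
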